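/- Let K ≥ 2, τ > 0, and β ∈ ℝ^K with all β_i > 0. Define h(x) = (∑_{j=1}^K β_j/x_j^τ)^{−K} ∏_{i=1}^K x_i^{−(τ+1)}, k(x) = ∑_{j=1}^K β_j/x_j^τ, and J_0 = 1/((K−1)! τ^{K−1} ∏_{i=1}^K β_i). Then: ∫_{S_K} h(x) [ (∑_{l=1}^K (β_l/x_l^τ)(log x_l)²)/k(x) − (∑_{l=1}^K (β_l/x_l^τ) log x_l)²/k(x)² ] d^{K−1}x = J_0 [ K(K−1)(π²/6 − 1) + (1/2) ∑_{i=1}^K ∑_{k=1}^K (log β_i − log β_k)² ] / (K(K+1) τ²). (The integrand equals −(1/K) h(x) ∂² log h(x)/∂τ², so this computes the τ–τ component of the Fisher information of the Concrete distribution.) -/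

import Mathlib

open MeasureTheory Finset

noncomputable def fillMap (K : ℕ) (u : Fin (K - 1) → ℝ) : Fin K → ℝ :=
  fun i => if h : (i : ℕ) < K - 1 then u ⟨i, h⟩ else 1 - ∑ j, u j

/-- The `(K-1)`-dimensional Lebesgue measure on the probability simplex `S_K`. -/
noncomputable def simplexMeasure (K : ℕ) : Measure (Fin K → ℝ) :=
  Measure.map (fillMap K)
    (volume.restrict {u : Fin (K - 1) → ℝ | (∀ j, 0 ≤ u j) ∧ ∑ j, u j ≤ 1})

/-- The unnormalized Concrete density `h(x) = (∑_j β_j/x_j^τ)^{-K} ∏_i x_i^{-(τ+1)}`. -/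
noncomputable def hfun (K : ℕ) (β : Fin K → ℝ) (τ : ℝ) (x : Fin K → ℝ) : ℝ :=
  (∑ j, β j / x j ^ τ) ^ (-(K : ℝ)) * ∏ i, x i ^ (-(τ + 1))

/-- `k(x) = ∑_j β_j/x_j^τ`. -/
noncomputable def kfun (K : ℕ) (β : Fin K → ℝ) (τ : ℝ) (x : Fin K → ℝ) : ℝ :=
  ∑ j, β j / x j ^ τ

/-- `J_0 = 1/((K−1)! τ^{K−1} ∏_i β_i)`. -/
noncomputable def J0 (K : ℕ) (β : Fin K → ℝ) (τ : ℝ) : ℝ :=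
  1 / ((Nat.factorial (K - 1) : ℝ) * τ ^ (K - 1) * ∏ i, β i)

/-!
Let `k x = ∑ l, β l / x l ^ τ`. Multiplying the bracket in the integrand by `k x ^ 2` gives the
dispersion `D` of the logarithms under the weights `β l / x l ^ τ`, so the integrand is
`Φ / k ^ (K + 2)` with `Φ x = (∏ i, x i ^ (-(τ + 1))) * D x`. Both `Φ` and `k` are homogeneous, so
integrating along rays shows that the integral of `Φ * exp (-k)` over the positive orthant is
`Γ(K + 2) / τ` times the integral over the simplex.

Over the orthant the coordinates decouple, and `t = β i / x i ^ τ` turns each of them into a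
standard exponential variable. Expanding `D` into pairs, each of the two factors `β i / x i ^ τ`
tilts the exponential law to `Gamma(2, 1)`, so that the pair `i ≠ k` contributes
`((log β i - log β k) ^ 2 + 2 * Var (log t)) / τ ^ 2`. Finally `Var (log t) = π ^ 2 / 6 - 1` is the
second order term of the reflection formula `Γ(2 + z) Γ(2 - z) sin (π z) = (1 - z ^ 2) π z`.
-/

open ProbabilityTheory
open scoped Topology

section GammaMeasure

variable {E : Type*} [NormedAddCommGroup E] [NormedSpace ℝ E] {a r : ℝ}

theorem gammaMeasure_eq_withDensity_restrict_Ioi (a r : ℝ) :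
    gammaMeasure a r = (volume.restrict (Set.Ioi 0)).withDensity fun t ↦
      ENNReal.ofReal (r ^ a / Real.Gamma a * t ^ (a - 1) * Real.exp (-(r * t))) := by
  rw [restrict_Ioi_eq_restrict_Ici, ← withDensity_indicator measurableSet_Ici, gammaMeasure]
  congr 1 with t
  by_cases ht : 0 ≤ t
  · rw [gammaPDF_of_nonneg ht, Set.indicator_of_mem (Set.mem_Ici.2 ht)]
  · rw [gammaPDF_of_neg (not_le.1 ht), Set.indicator_of_notMem (mt Set.mem_Ici.1 ht)]

theorem gammaDensity_nonneg (ha : 0 < a) (hr : 0 < r) {t : ℝ} (ht : 0 < t) :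
    0 ≤ r ^ a / Real.Gamma a * t ^ (a - 1) * Real.exp (-(r * t)) := by
  positivity

theorem integral_gammaMeasure (ha : 0 < a) (hr : 0 < r) (f : ℝ → E) :
    ∫ t, f t ∂gammaMeasure a r =
      ∫ t in Set.Ioi 0, (r ^ a / Real.Gamma a * t ^ (a - 1) * Real.exp (-(r * t))) • f t := by
  rw [gammaMeasure_eq_withDensity_restrict_Ioi,
    integral_withDensity_eq_integral_toReal_smul (by fun_prop) (by simp)]
  refine setIntegral_congr_fun measurableSet_Ioi fun t ht ↦ ?_
  simp_rw [ENNReal.toReal_ofReal (gammaDensity_nonneg ha hr ht)]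

theorem integrable_gammaMeasure_iff (ha : 0 < a) (hr : 0 < r) {f : ℝ → E} :
    Integrable f (gammaMeasure a r) ↔
      IntegrableOn (fun t ↦ (r ^ a / Real.Gamma a * t ^ (a - 1) * Real.exp (-(r * t))) • f t)
        (Set.Ioi 0) := by
  rw [gammaMeasure_eq_withDensity_restrict_Ioi,
    integrable_withDensity_iff_integrable_smul' (by fun_prop) (by simp)]
  refine integrableOn_congr_fun (fun t ht ↦ ?_) measurableSet_Ioi
  simp_rw [ENNReal.toReal_ofReal (gammaDensity_nonneg ha hr ht)]

theorem gammaDensity_smul_exp_mul_log {t : ℝ} (ht : 0 < t) (z : ℝ) :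
    (r ^ a / Real.Gamma a * t ^ (a - 1) * Real.exp (-(r * t))) • Real.exp (z * Real.log t) =
      r ^ a / Real.Gamma a * (t ^ (a + z - 1) * Real.exp (-(r * t))) := by
  rw [mul_comm z, ← Real.rpow_def_of_pos ht, show a + z - 1 = a - 1 + z by ring,
    Real.rpow_add ht, smul_eq_mul]
  ring

theorem mgf_log_gammaMeasure (ha : 0 < a) (hr : 0 < r) {z : ℝ} (hz : 0 < a + z) :
    mgf Real.log (gammaMeasure a r) z = r ^ (-z) * (Real.Gamma (a + z) / Real.Gamma a) := by
  rw [mgf, integral_gammaMeasure ha hr, setIntegral_congr_fun measurableSet_Ioi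
    fun t ht ↦ gammaDensity_smul_exp_mul_log ht z, integral_const_mul,
    Real.integral_rpow_mul_exp_neg_mul_Ioi hz hr, one_div, Real.inv_rpow hr.le,
    Real.rpow_add hr, Real.rpow_neg hr.le]
  field_simp

theorem Ioi_neg_subset_integrableExpSet_log_gammaMeasure (ha : 0 < a) (hr : 0 < r) :
    Set.Ioi (-a) ⊆ integrableExpSet Real.log (gammaMeasure a r) := by
  intro z hz
  have hexp : -1 < a + z - 1 := by linarith [Set.mem_Ioi.1 hz]
  refine (integrable_gammaMeasure_iff ha hr).2 (IntegrableOn.congr_fun ?_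
    (fun t ht ↦ (gammaDensity_smul_exp_mul_log ht z).symm) measurableSet_Ioi)
  simpa [IntegrableOn] using (integrableOn_rpow_mul_exp_neg_mul_rpow hexp one_pos hr).const_mul _

theorem zero_mem_interior_integrableExpSet_log_gammaMeasure (ha : 0 < a) (hr : 0 < r) :
    0 ∈ interior (integrableExpSet Real.log (gammaMeasure a r)) :=
  interior_maximal (Ioi_neg_subset_integrableExpSet_log_gammaMeasure ha hr) isOpen_Ioi
    (neg_lt_zero.2 ha)

theorem memLp_log_gammaMeasure (ha : 0 < a) (hr : 0 < r) (p : NNReal) :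
    MemLp Real.log p (gammaMeasure a r) :=
  memLp_of_mem_interior_integrableExpSet
    (zero_mem_interior_integrableExpSet_log_gammaMeasure ha hr) p

end GammaMeasure

section LogVariance

theorem iteratedDeriv_two_mgf_mul_mgf_neg {Ω : Type*} [MeasurableSpace Ω] {μ : Measure Ω}
    [IsProbabilityMeasure μ] {X : Ω → ℝ} (h : 0 ∈ interior (integrableExpSet X μ)) :
    iteratedDeriv 2 (fun z ↦ mgf X μ z * mgf X μ (-z)) 0 = 2 * Var[X; μ] := by
  have hsmooth : ContDiffAt ℝ 2 (mgf X μ) 0 := (analyticAt_mgf h).contDiffAt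
  have hsmooth_neg : ContDiffAt ℝ 2 (fun z ↦ mgf X μ (-z)) 0 :=
    .comp (g := mgf X μ) 0 (by simpa using hsmooth) (by fun_prop)
  have hvar := variance_eq_sub (memLp_of_mem_interior_integrableExpSet h 2)
  rw [show (fun z ↦ mgf X μ z * mgf X μ (-z)) = mgf X μ * fun z ↦ mgf X μ (-z) from rfl,
    iteratedDeriv_mul hsmooth hsmooth_neg, hvar]
  simp only [Nat.reduceAdd, Finset.sum_range_succ, range_one, sum_singleton, iteratedDeriv_comp_neg,
    neg_zero, iteratedDeriv_mgf_zero h, Pi.pow_apply, pow_zero, integral_const, probReal_univ,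
    smul_eq_mul, mul_one, one_mul, Nat.choose_zero_right, Nat.choose_succ_self_right,
    Nat.choose_self, Nat.cast_one, Nat.cast_ofNat, tsub_zero, tsub_self, Nat.add_one_sub_one,
    even_two, Even.neg_pow, one_pow, pow_one, neg_mul, mul_neg]
  ring

theorem iteratedDeriv_two_of_mul_sin_pi_eq {P : ℝ → ℝ} (hP : ContDiffAt ℝ 3 P 0) {c : ℝ}
    (h : ∀ᶠ z in 𝓝 0, P z * Real.sin (Real.pi * z) = (1 - c * z ^ 2) * (Real.pi * z)) :
    iteratedDeriv 2 P 0 = Real.pi ^ 2 / 3 - 2 * c := by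
  have hsin (m : ℕ) : iteratedDeriv m (fun z ↦ Real.sin (Real.pi * z)) 0 =
      Real.pi ^ m * iteratedDeriv m Real.sin 0 := by
    simp [iteratedDeriv_comp_const_mul (Real.contDiff_sin (n := m))]
  have hcubic (m : ℕ) : iteratedDeriv m (fun z : ℝ ↦ Real.pi * z ^ 1 - c * Real.pi * z ^ 3) 0 =
      Real.pi * (if m = 1 then 1 else 0) - c * Real.pi * (if m = 3 then 6 else 0) := by
    rw [iteratedDeriv_fun_sub (by fun_prop) (by fun_prop), iteratedDeriv_const_mul_field,
      iteratedDeriv_const_mul_field, iteratedDeriv_fun_pow_zero, iteratedDeriv_fun_pow_zero]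
    simp [Nat.factorial]
  have hleibniz {m : ℕ} (hm : m ≤ 3) :
      ∑ i ∈ range (m + 1), m.choose i * iteratedDeriv i P 0 *
          (Real.pi ^ (m - i) * iteratedDeriv (m - i) Real.sin 0) =
        Real.pi * (if m = 1 then 1 else 0) - c * Real.pi * (if m = 3 then 6 else 0) := by
    have heq : P * (fun z ↦ Real.sin (Real.pi * z)) =ᶠ[𝓝 0]
        fun z ↦ Real.pi * z ^ 1 - c * Real.pi * z ^ 3 :=
      h.mono fun z hz ↦ by simpa using hz.trans (by ring)
    simp_rw [← hcubic, ← heq.iteratedDeriv_eq, ← hsin]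
    exact (iteratedDeriv_mul (hP.of_le (by exact_mod_cast hm)) (by fun_prop)).symm
  -- The even derivatives of `sin` vanish at `0`, so the Leibniz rule at order three only sees `P`
  -- and its second derivative at `0`.
  have hP_zero : P 0 = 1 := by
    simpa [Finset.sum_range_succ, Real.pi_ne_zero] using hleibniz (m := 1) (by norm_num)
  have hthird : -Real.pi ^ 3 + 3 * iteratedDeriv 2 P 0 * Real.pi = -(c * Real.pi * 6) := by
    simpa [Finset.sum_range_succ, hP_zero] using hleibniz le_rfl
  refine mul_left_cancel₀ (mul_ne_zero three_ne_zero Real.pi_ne_zero) ?_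
  linear_combination hthird

theorem Gamma_two_add_mul_Gamma_two_sub_mul_sin {z : ℝ} (hz : |z| < 1) :
    Real.Gamma (2 + z) * Real.Gamma (2 - z) * Real.sin (Real.pi * z) =
      (1 - z ^ 2) * (Real.pi * z) := by
  obtain ⟨hz_gt, hz_lt⟩ := abs_lt.1 hz
  rcases eq_or_ne z 0 with rfl | hz_ne
  · simp
  have hsin : Real.sin (Real.pi * z) ≠ 0 := by
    rw [Ne, Real.sin_eq_zero_iff_of_lt_of_lt (by nlinarith [Real.pi_pos])
      (by nlinarith [Real.pi_pos])]
    exact mul_ne_zero Real.pi_ne_zero hz_ne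
  have hplus : Real.Gamma (2 + z) = (1 + z) * (z * Real.Gamma z) := by
    rw [← Real.Gamma_add_one hz_ne, add_comm 1 z, ← Real.Gamma_add_one (by linarith)]
    ring_nf
  have hminus : Real.Gamma (2 - z) = (1 - z) * Real.Gamma (1 - z) := by
    rw [← Real.Gamma_add_one (by linarith)]
    ring_nf
  have hreflection := Real.Gamma_mul_Gamma_one_sub z
  rw [eq_div_iff hsin] at hreflection
  rw [hplus, hminus]
  linear_combination (1 + z) * z * (1 - z) * hreflection

theorem variance_log_gammaMeasure_two {r : ℝ} (hr : 0 < r) :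
    Var[Real.log; gammaMeasure 2 r] = Real.pi ^ 2 / 6 - 1 := by
  have := isProbabilityMeasure_gammaMeasure two_pos hr
  have hinterior := zero_mem_interior_integrableExpSet_log_gammaMeasure two_pos hr
  have hvar := iteratedDeriv_two_mgf_mul_mgf_neg hinterior
  have hsmooth : ContDiffAt ℝ 3 (mgf Real.log (gammaMeasure 2 r)) 0 :=
    (analyticAt_mgf hinterior).contDiffAt
  have hsmooth_neg : ContDiffAt ℝ 3 (fun z ↦ mgf Real.log (gammaMeasure 2 r) (-z)) 0 :=
    .comp (g := mgf Real.log (gammaMeasure 2 r)) 0 (by simpa using hsmooth) (by fun_prop)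
  have hreflection : ∀ᶠ z in 𝓝 (0 : ℝ), mgf Real.log (gammaMeasure 2 r) z *
      mgf Real.log (gammaMeasure 2 r) (-z) * Real.sin (Real.pi * z) =
        (1 - 1 * z ^ 2) * (Real.pi * z) := by
    filter_upwards [Metric.ball_mem_nhds (0 : ℝ) one_pos] with z hz
    rw [mem_ball_zero_iff, Real.norm_eq_abs] at hz
    obtain ⟨hz_gt, hz_lt⟩ := abs_lt.1 hz
    rw [mgf_log_gammaMeasure two_pos hr (by linarith),
      mgf_log_gammaMeasure two_pos hr (by linarith), one_mul,
      ← Gamma_two_add_mul_Gamma_two_sub_mul_sin hz, neg_neg, Real.rpow_neg hr.le,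
      Real.Gamma_two, ← sub_eq_add_neg]
    have := (Real.rpow_pos_of_pos hr z).ne'
    field_simp
  linarith [iteratedDeriv_two_of_mul_sin_pi_eq (hsmooth.mul hsmooth_neg) hreflection]

theorem integral_sub_sq_add_integral_sub_sq {Ω : Type*} {mΩ : MeasurableSpace Ω} {μ : Measure Ω}
    [IsProbabilityMeasure μ] {Y : Ω → ℝ} (hY : MemLp Y 2 μ) (c d : ℝ) :
    (∫ ω, (c - Y ω) ^ 2 ∂μ) + (∫ ω, (d - Y ω) ^ 2 ∂μ) -
        2 * ((∫ ω, (c - Y ω) ∂μ) * ∫ ω, (d - Y ω) ∂μ) =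
      (c - d) ^ 2 + 2 * Var[Y; μ] := by
  have hmean (e : ℝ) : ∫ ω, (e - Y ω) ∂μ = e - ∫ ω, Y ω ∂μ := by
    rw [integral_sub (integrable_const e) (hY.integrable one_le_two)]
    simp
  have hsq (e : ℝ) : ∫ ω, (e - Y ω) ^ 2 ∂μ = Var[Y; μ] + (e - ∫ ω, Y ω ∂μ) ^ 2 := by
    have hvar := variance_eq_sub (X := fun ω ↦ e - Y ω) ((memLp_const e).sub hY)
    rw [variance_const_sub hY.1, hmean] at hvar
    exact sub_eq_iff_eq_add.1 hvar.symm
  rw [hsq, hsq, hmean, hmean]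
  ring

end LogVariance

section Frechet

variable {E : Type*} [NormedAddCommGroup E] [NormedSpace ℝ E] {τ b : ℝ}

theorem integral_rpow_smul_comp_mul_rpow_Ioi (g : ℝ → E) {p : ℝ} (hp : p ≠ 0) (hb : 0 < b) :
    ∫ x in Set.Ioi 0, x ^ (p - 1) • g (b * x ^ p) = (|p| * b)⁻¹ • ∫ y in Set.Ioi 0, g y := by
  have hscale := integral_comp_mul_left_Ioi g 0 hb
  rw [mul_zero, ← integral_comp_rpow_Ioi _ hp] at hscale
  rw [mul_inv, ← smul_smul, ← hscale, ← integral_smul]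
  refine setIntegral_congr_fun measurableSet_Ioi fun x _ ↦ ?_
  simp only [smul_smul]
  rw [inv_mul_cancel_left₀ (abs_ne_zero.2 hp)]

theorem integrableOn_rpow_smul_comp_mul_rpow_Ioi_iff (g : ℝ → E) {p : ℝ} (hp : p ≠ 0)
    (hb : 0 < b) :
    IntegrableOn (fun x ↦ x ^ (p - 1) • g (b * x ^ p)) (Set.Ioi 0) ↔
      IntegrableOn g (Set.Ioi 0) := by
  rw [integrableOn_Ioi_comp_rpow_iff' (fun y ↦ g (b * y)) hp,
    integrableOn_Ioi_comp_mul_left_iff g 0 hb, mul_zero]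

/-- The unnormalized density `x ^ (-(τ + 1)) * exp (-b / x ^ τ)` of the Fréchet distribution with
shape `τ` and rate `b`, that is, of `(b / t) ^ (1 / τ)` for a standard exponential variable `t`. -/
noncomputable def frechetWeight (τ b x : ℝ) : ℝ :=
  x ^ (-(τ + 1)) * Real.exp (-(b / x ^ τ))

theorem eqOn_frechetWeight_mul_comp_div_rpow (τ b : ℝ) (g : ℝ → ℝ) :
    Set.EqOn (fun x ↦ frechetWeight τ b x * g (b / x ^ τ))
      (fun x ↦ x ^ (-τ - 1) • (Real.exp (-(b * x ^ (-τ))) * g (b * x ^ (-τ)))) (Set.Ioi 0) := by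
  intro x hx
  simp only [frechetWeight, smul_eq_mul, Real.rpow_neg (le_of_lt hx) τ, ← div_eq_mul_inv,
    neg_add', mul_assoc]

theorem integral_frechetWeight_mul_comp_div_rpow (hτ : 0 < τ) (hb : 0 < b) (g : ℝ → ℝ) :
    ∫ x in Set.Ioi 0, frechetWeight τ b x * g (b / x ^ τ) =
      1 / (τ * b) * ∫ t in Set.Ioi 0, Real.exp (-t) * g t := by
  rw [setIntegral_congr_fun measurableSet_Ioi (eqOn_frechetWeight_mul_comp_div_rpow τ b g),
    integral_rpow_smul_comp_mul_rpow_Ioi (fun t ↦ Real.exp (-t) * g t) (neg_ne_zero.2 hτ.ne') hb,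
    abs_neg, abs_of_pos hτ, smul_eq_mul, one_div]

theorem integrableOn_frechetWeight_mul_comp_div_rpow_iff (hτ : 0 < τ) (hb : 0 < b) (g : ℝ → ℝ) :
    IntegrableOn (fun x ↦ frechetWeight τ b x * g (b / x ^ τ)) (Set.Ioi 0) ↔
      IntegrableOn (fun t ↦ Real.exp (-t) * g t) (Set.Ioi 0) := by
  rw [integrableOn_congr_fun (eqOn_frechetWeight_mul_comp_div_rpow τ b g) measurableSet_Ioi,
    integrableOn_rpow_smul_comp_mul_rpow_Ioi_iff (fun t ↦ Real.exp (-t) * g t)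
      (neg_ne_zero.2 hτ.ne') hb]

theorem integral_frechetWeight (hτ : 0 < τ) (hb : 0 < b) :
    ∫ x in Set.Ioi 0, frechetWeight τ b x = 1 / (τ * b) := by
  simpa only [mul_one, integral_exp_neg_Ioi_zero] using
    integral_frechetWeight_mul_comp_div_rpow hτ hb fun _ ↦ 1

theorem integrableOn_frechetWeight (hτ : 0 < τ) (hb : 0 < b) :
    IntegrableOn (frechetWeight τ b) (Set.Ioi 0) := by
  simpa using (integrableOn_frechetWeight_mul_comp_div_rpow_iff hτ hb fun _ ↦ 1).2
    (by simpa using integrableOn_exp_neg_Ioi 0)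

theorem log_eq_log_sub_log_div_rpow (hτ : τ ≠ 0) (hb : b ≠ 0) {x : ℝ} (hx : 0 < x) :
    Real.log x = (Real.log b - Real.log (b / x ^ τ)) / τ := by
  rw [Real.log_div hb (Real.rpow_pos_of_pos hx _).ne', Real.log_rpow hx]
  field_simp
  ring

theorem eqOn_frechetWeight_mul_log_pow (hτ : τ ≠ 0) (hb : b ≠ 0) (m : ℕ) :
    Set.EqOn (fun x ↦ frechetWeight τ b x * (b / x ^ τ * Real.log x ^ m))
      (fun x ↦ frechetWeight τ b x *
        (b / x ^ τ * ((Real.log b - Real.log (b / x ^ τ)) ^ m / τ ^ m))) (Set.Ioi 0) := by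
  intro x hx
  simp only [← div_pow, ← log_eq_log_sub_log_div_rpow hτ hb hx]

theorem exp_neg_mul_eq_gammaDensity_two_smul (t y : ℝ) :
    Real.exp (-t) * (t * y) =
      (1 ^ (2 : ℝ) / Real.Gamma 2 * t ^ (2 - 1 : ℝ) * Real.exp (-(1 * t))) • y := by
  simp only [Real.one_rpow, Real.Gamma_two, div_one, one_mul, show (2 - 1 : ℝ) = 1 by norm_num,
    Real.rpow_one, smul_eq_mul]
  ring

theorem integrable_sub_log_pow_gammaMeasure {a r : ℝ} (ha : 0 < a) (hr : 0 < r)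
    (c : ℝ) (m : ℕ) :
    Integrable (fun t ↦ (c - Real.log t) ^ m) (gammaMeasure a r) := by
  have := isProbabilityMeasure_gammaMeasure ha hr
  have hLp : MemLp (fun t ↦ c - Real.log t) m (gammaMeasure a r) :=
    (memLp_const c).sub (memLp_log_gammaMeasure ha hr m)
  have hnorm := hLp.integrable_norm_pow'
  simp only [← norm_pow] at hnorm
  exact (integrable_norm_iff (hLp.1.pow m)).1 hnorm

theorem integrableOn_frechetWeight_mul_log_pow (hτ : 0 < τ) (hb : 0 < b) (m : ℕ) :
    IntegrableOn (fun x ↦ frechetWeight τ b x * (b / x ^ τ * Real.log x ^ m)) (Set.Ioi 0) := by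
  rw [integrableOn_congr_fun (eqOn_frechetWeight_mul_log_pow hτ.ne' hb.ne' m) measurableSet_Ioi,
    integrableOn_frechetWeight_mul_comp_div_rpow_iff hτ hb
      fun t ↦ t * ((Real.log b - Real.log t) ^ m / τ ^ m)]
  simp_rw [exp_neg_mul_eq_gammaDensity_two_smul]
  exact (integrable_gammaMeasure_iff two_pos one_pos).1
    ((integrable_sub_log_pow_gammaMeasure two_pos one_pos (Real.log b) m).div_const (τ ^ m))

theorem integral_frechetWeight_mul_log_pow (hτ : 0 < τ) (hb : 0 < b) (m : ℕ) :
    ∫ x in Set.Ioi 0, frechetWeight τ b x * (b / x ^ τ * Real.log x ^ m) =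
      1 / (τ * b) * ((∫ t, (Real.log b - Real.log t) ^ m ∂gammaMeasure 2 1) / τ ^ m) := by
  rw [setIntegral_congr_fun measurableSet_Ioi
    (eqOn_frechetWeight_mul_log_pow hτ.ne' hb.ne' m),
    integral_frechetWeight_mul_comp_div_rpow hτ hb
      fun t ↦ t * ((Real.log b - Real.log t) ^ m / τ ^ m),
    ← integral_div, integral_gammaMeasure two_pos one_pos]
  simp_rw [exp_neg_mul_eq_gammaDensity_two_smul]

theorem prod_frechetWeight {ι : Type*} [Fintype ι] (τ : ℝ) (β x : ι → ℝ) :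
    ∏ i, frechetWeight τ (β i) (x i) =
      (∏ i, x i ^ (-(τ + 1))) * Real.exp (-∑ i, β i / x i ^ τ) := by
  simp only [frechetWeight, Finset.prod_mul_distrib, ← Real.exp_sum, Finset.sum_neg_distrib]

end Frechet

section Pi

variable {ι α 𝕜 : Type*} [Fintype ι]

theorem prod_mul_ite_mul_ite {M : Type*} [CommMonoid M] [DecidableEq ι] (c u v : ι → M) (i k : ι) :
    ∏ j, c j * ((if j = i then u j else 1) * (if j = k then v j else 1)) =
      (∏ j, c j) * (u i * v k) := by
  simp only [Finset.prod_mul_distrib, Finset.prod_ite_eq', Finset.mem_univ, if_true]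

variable [RCLike 𝕜] [MeasurableSpace α] {μ : ι → Measure α} [∀ i, SigmaFinite (μ i)]

open scoped Classical in
theorem integrable_pi_prod_mul_pair {p : ι → α → 𝕜} (hp : ∀ j, Integrable (p j) (μ j)) {i k : ι}
    (hik : i ≠ k) {A B : α → 𝕜} (hA : Integrable (fun y ↦ p i y * A y) (μ i))
    (hB : Integrable (fun y ↦ p k y * B y) (μ k)) :
    Integrable (fun x : ι → α ↦ (∏ j, p j (x j)) * (A (x i) * B (x k))) (Measure.pi μ) := by
  simp_rw [fun x : ι → α ↦ (prod_mul_ite_mul_ite (fun j ↦ p j (x j)) (fun j ↦ A (x j))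
    (fun j ↦ B (x j)) i k).symm]
  refine Integrable.fintype_prod (f := fun j y ↦
    p j y * ((if j = i then A y else 1) * (if j = k then B y else 1))) fun j ↦ ?_
  rcases eq_or_ne j i with rfl | hji
  · simpa [hik] using hA
  rcases eq_or_ne j k with rfl | hjk
  · simpa [hji] using hB
  · simpa [hji, hjk] using hp j

open scoped Classical in
theorem integral_pi_prod_mul_pair {p : ι → α → 𝕜} {i k : ι} (hik : i ≠ k) {A B : α → 𝕜}
    {a b : 𝕜} (hA : ∫ y, p i y * A y ∂μ i = (∫ y, p i y ∂μ i) * a)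
    (hB : ∫ y, p k y * B y ∂μ k = (∫ y, p k y ∂μ k) * b) :
    ∫ x, (∏ j, p j (x j)) * (A (x i) * B (x k)) ∂Measure.pi μ =
      (∏ j, ∫ y, p j y ∂μ j) * (a * b) := by
  have hfactor (j : ι) :
      ∫ y, p j y * ((if j = i then A y else 1) * (if j = k then B y else 1)) ∂μ j =
        (∫ y, p j y ∂μ j) * ((if j = i then a else 1) * (if j = k then b else 1)) := by
    rcases eq_or_ne j i with rfl | hji
    · simpa [hik] using hA
    rcases eq_or_ne j k with rfl | hjk
    · simpa [hji] using hB
    · simp [hji, hjk]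
  simp_rw [fun x : ι → α ↦ (prod_mul_ite_mul_ite (fun j ↦ p j (x j)) (fun j ↦ A (x j))
    (fun j ↦ B (x j)) i k).symm]
  rw [integral_fintype_prod_eq_prod fun j y ↦
    p j y * ((if j = i then A y else 1) * (if j = k then B y else 1))]
  simp_rw [hfactor]
  exact prod_mul_ite_mul_ite _ (fun _ ↦ a) (fun _ ↦ b) i k

end Pi

section Simplex

/-- The open positive orthant of `ι → ℝ`, the cone over the interior of the simplex. -/
def posOrthant (ι : Type*) : Set (ι → ℝ) :=
  Set.univ.pi fun _ ↦ Set.Ioi 0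

theorem mem_posOrthant {ι : Type*} {x : ι → ℝ} : x ∈ posOrthant ι ↔ ∀ i, 0 < x i :=
  Set.mem_univ_pi

theorem measurableSet_posOrthant (ι : Type*) [Countable ι] : MeasurableSet (posOrthant ι) :=
  .univ_pi fun _ ↦ measurableSet_Ioi

theorem restrict_posOrthant_eq_pi (ι : Type*) [Fintype ι] :
    (volume : Measure (ι → ℝ)).restrict (posOrthant ι) =
      Measure.pi fun _ : ι ↦ volume.restrict (Set.Ioi 0) := by
  rw [posOrthant, volume_pi, Measure.restrict_pi_pi]

theorem smul_mem_posOrthant_iff {ι : Type*} {s : ℝ} (hs : 0 < s) {x : ι → ℝ} :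
    s • x ∈ posOrthant ι ↔ x ∈ posOrthant ι := by
  simp [mem_posOrthant, hs]

theorem measurable_fillMap (K : ℕ) : Measurable (fillMap K) := by
  refine measurable_pi_iff.2 fun i ↦ ?_
  by_cases hi : (i : ℕ) < K - 1
  · simpa only [fillMap, hi, dif_pos] using measurable_pi_apply _
  · simp only [fillMap, hi, dif_neg, not_false_eq_true]
    fun_prop

instance sFinite_simplexMeasure (K : ℕ) : SFinite (simplexMeasure K) := by
  unfold simplexMeasure
  infer_instance

variable {n : ℕ}

theorem fillMap_succ (u : Fin n → ℝ) : fillMap (n + 1) u = Fin.snoc u (1 - ∑ j, u j) := by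
  refine funext <| Fin.lastCases ?_ fun j ↦ ?_ <;> simp [fillMap]

theorem smul_fillMap_succ (s : ℝ) (u : Fin n → ℝ) :
    s • fillMap (n + 1) u = Fin.snoc (s • u) (s - ∑ j, (s • u) j) := by
  refine funext <| Fin.lastCases ?_ fun j ↦ ?_ <;>
    simp [fillMap_succ, ← Finset.mul_sum, mul_sub]

theorem ae_linearMap_ne {E : Type*} [NormedAddCommGroup E] [NormedSpace ℝ E]
    [FiniteDimensional ℝ E] [MeasurableSpace E] [BorelSpace E] (μ : Measure E)
    [μ.IsAddHaarMeasure] (f : E →ₗ[ℝ] ℝ) {c : ℝ} (hc : c ≠ 0) : ∀ᵐ x ∂μ, f x ≠ c := by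
  let H : AffineSubspace ℝ E := (AffineSubspace.mk' c ⊥).comap f.toAffineMap
  have mem_H (x : E) : x ∈ H ↔ f x = c := by simp [H, sub_eq_zero]
  have zero_notMem_H : 0 ∉ H := fun h ↦ hc <| by simpa using ((mem_H 0).1 h).symm
  have hH : H ≠ ⊤ := fun h ↦ zero_notMem_H (h ▸ AffineSubspace.mem_top ℝ E 0)
  filter_upwards [measure_eq_zero_iff_ae_notMem.1 (Measure.addHaar_affineSubspace μ H hH)] with x hx
  exact fun h ↦ hx ((mem_H x).2 h)

theorem ae_apply_ne {ι : Type*} [Fintype ι] (j : ι) (c : ℝ) : ∀ᵐ u : ι → ℝ, u j ≠ c := by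
  simpa only [ae_iff, not_not, volume_pi] using
    Measure.pi_hyperplane (fun _ : ι ↦ (volume : Measure ℝ)) j c

theorem ae_fillMap_succ_mem_posOrthant_iff (n : ℕ) :
    ∀ᵐ u : Fin n → ℝ, fillMap (n + 1) u ∈ posOrthant (Fin (n + 1)) ↔
      (∀ j, 0 ≤ u j) ∧ ∑ j, u j ≤ 1 := by
  filter_upwards [ae_linearMap_ne volume (∑ j : Fin n, LinearMap.proj j) one_ne_zero,
    ae_all_iff.2 fun j : Fin n ↦ ae_apply_ne j 0] with u hsum hne
  have hsum_lt : ∑ j, u j < 1 ↔ ∑ j, u j ≤ 1 := by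
    rw [lt_iff_le_and_ne, and_iff_left (by simpa using hsum)]
  have hpos (j : Fin n) : 0 < u j ↔ 0 ≤ u j := by
    rw [lt_iff_le_and_ne, and_iff_left (hne j).symm]
  simp [mem_posOrthant, Fin.forall_fin_succ', fillMap_succ, hsum_lt, hpos]

theorem simplexMeasure_succ_eq_restrict_posOrthant (n : ℕ) :
    simplexMeasure (n + 1) =
      (Measure.map (fillMap (n + 1)) volume).restrict (posOrthant (Fin (n + 1))) := by
  rw [Measure.restrict_map (measurable_fillMap _) (measurableSet_posOrthant _), simplexMeasure,
    Measure.restrict_congr_set]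
  filter_upwards [ae_fillMap_succ_mem_posOrthant_iff n] with u hu
  exact propext hu.symm

theorem lintegral_eq_ofReal_mul_lintegral_comp_smul {E : Type*} [NormedAddCommGroup E]
    [NormedSpace ℝ E] [FiniteDimensional ℝ E] [MeasurableSpace E] [BorelSpace E] (μ : Measure E)
    [μ.IsAddHaarMeasure] {s : ℝ} (hs : s ≠ 0) (H : E → ENNReal) :
    ∫⁻ v, H v ∂μ = ENNReal.ofReal (|s| ^ Module.finrank ℝ E) * ∫⁻ u, H (s • u) ∂μ := by
  have hpow : 0 < |s| ^ Module.finrank ℝ E := by positivity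
  rw [← (measurableEmbedding_const_smul₀ hs).lintegral_map, Measure.map_addHaar_smul μ hs,
    lintegral_smul_measure, smul_eq_mul, ← mul_assoc, ← ENNReal.ofReal_mul hpow.le, abs_inv,
    abs_pow, mul_inv_cancel₀ hpow.ne', ENNReal.ofReal_one, one_mul]

theorem measurePreserving_snoc (n : ℕ) :
    MeasurePreserving (fun z : ℝ × (Fin n → ℝ) ↦ (Fin.snoc z.2 z.1 : Fin (n + 1) → ℝ)) := by
  convert (volume_preserving_piFinSuccAbove (fun _ : Fin (n + 1) ↦ ℝ) (Fin.last n)).symm using 1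
  exact funext fun z ↦ (Fin.insertNth_last' z.1 z.2).symm

theorem lintegral_eq_lintegral_lintegral_snoc_sub_sum {G : (Fin (n + 1) → ℝ) → ENNReal}
    (hG : Measurable G) :
    ∫⁻ x, G x = ∫⁻ s, ∫⁻ v : Fin n → ℝ, G (Fin.snoc v (s - ∑ j, v j)) := by
  have hsnoc := measurePreserving_snoc n
  have hshear : Measurable fun z : (Fin n → ℝ) × ℝ ↦
      G (Fin.snoc z.1 (z.2 - ∑ j, z.1 j)) :=
    (hG.comp hsnoc.measurable).comp
      (f := fun z : (Fin n → ℝ) × ℝ ↦ (z.2 - ∑ j, z.1 j, z.1)) (by fun_prop)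
  calc ∫⁻ x, G x
      = ∫⁻ v : Fin n → ℝ, ∫⁻ t, G (Fin.snoc v t) := by
        rw [← hsnoc.lintegral_comp hG, Measure.volume_eq_prod]
        exact lintegral_prod_symm _ (hG.comp hsnoc.measurable).aemeasurable
    _ = ∫⁻ v : Fin n → ℝ, ∫⁻ s, G (Fin.snoc v (s - ∑ j, v j)) :=
        lintegral_congr fun v ↦
          (lintegral_sub_right_eq_self (fun t ↦ G (Fin.snoc v t)) (∑ j, v j)).symm
    _ = ∫⁻ s, ∫⁻ v : Fin n → ℝ, G (Fin.snoc v (s - ∑ j, v j)) :=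
        lintegral_lintegral_swap hshear.aemeasurable

theorem pos_of_snoc_mem_posOrthant {v : Fin n → ℝ} {s : ℝ}
    (h : Fin.snoc v (s - ∑ j, v j) ∈ posOrthant (Fin (n + 1))) : 0 < s := by
  simpa [Fin.sum_univ_castSucc] using
    Finset.sum_pos (fun i _ ↦ mem_posOrthant.1 h i) Finset.univ_nonempty

theorem setLIntegral_posOrthant_eq_lintegral_smul {G : (Fin (n + 1) → ℝ) → ENNReal}
    (hG : Measurable G) :
    ∫⁻ x in posOrthant (Fin (n + 1)), G x =
      ∫⁻ s in Set.Ioi 0, ENNReal.ofReal (s ^ n) * ∫⁻ x, G (s • x) ∂simplexMeasure (n + 1) := by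
  have hmeas := measurableSet_posOrthant (Fin (n + 1))
  rw [← lintegral_indicator hmeas,
    lintegral_eq_lintegral_lintegral_snoc_sub_sum (hG.indicator hmeas),
    ← lintegral_indicator measurableSet_Ioi]
  refine lintegral_congr fun s ↦ ?_
  by_cases hs : 0 < s
  · have hcomp (x : Fin (n + 1) → ℝ) : (posOrthant (Fin (n + 1))).indicator G (s • x) =
        (posOrthant (Fin (n + 1))).indicator (fun x ↦ G (s • x)) x := by
      by_cases hx : x ∈ posOrthant (Fin (n + 1))
      · rw [Set.indicator_of_mem hx, Set.indicator_of_mem ((smul_mem_posOrthant_iff hs).2 hx)]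
      · rw [Set.indicator_of_notMem hx,
          Set.indicator_of_notMem (mt (smul_mem_posOrthant_iff hs).1 hx)]
    have hscaled : Measurable fun x ↦ G (s • x) := hG.comp (measurable_const_smul s)
    rw [Set.indicator_of_mem (Set.mem_Ioi.2 hs),
      lintegral_eq_ofReal_mul_lintegral_comp_smul volume hs.ne', abs_of_pos hs,
      Module.finrank_fin_fun, simplexMeasure_succ_eq_restrict_posOrthant,
      ← lintegral_indicator hmeas, lintegral_map (hscaled.indicator hmeas) (measurable_fillMap _)]
    simp_rw [← smul_fillMap_succ, hcomp]
    rfl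
  · rw [Set.indicator_of_notMem (mt Set.mem_Ioi.1 hs), lintegral_eq_zero_of_ae_eq_zero]
    exact ae_of_all _ fun v ↦ Set.indicator_of_notMem (mt pos_of_snoc_mem_posOrthant hs) _

/-- The measure `s ^ n ds` on the half-line `(0, ∞)`: the radial part of Lebesgue measure on
`ℝ ^ (n + 1)` when the angular variable is the point of the simplex on the same ray. -/
noncomputable def radialMeasure (n : ℕ) : Measure ℝ :=
  (volume.restrict (Set.Ioi 0)).withDensity fun s ↦ ENNReal.ofReal (s ^ n)

instance sFinite_radialMeasure (n : ℕ) : SFinite (radialMeasure n) := by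
  unfold radialMeasure
  infer_instance

theorem integral_radialMeasure {E : Type*} [NormedAddCommGroup E] [NormedSpace ℝ E] (n : ℕ)
    (f : ℝ → E) : ∫ s, f s ∂radialMeasure n = ∫ s in Set.Ioi 0, s ^ n • f s := by
  rw [radialMeasure, integral_withDensity_eq_integral_toReal_smul (by fun_prop) (by simp)]
  refine setIntegral_congr_fun measurableSet_Ioi fun s hs ↦ ?_
  simp_rw [ENNReal.toReal_ofReal (pow_nonneg (le_of_lt hs) n)]

theorem measurePreserving_smul_simplexMeasure (n : ℕ) :
    MeasurePreserving (fun z : ℝ × (Fin (n + 1) → ℝ) ↦ z.1 • z.2)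
      ((radialMeasure n).prod (simplexMeasure (n + 1)))
      (volume.restrict (posOrthant (Fin (n + 1)))) := by
  refine ⟨by fun_prop, Measure.ext_of_lintegral _ fun G hG ↦ ?_⟩
  have hcomp : Measurable fun z : ℝ × (Fin (n + 1) → ℝ) ↦ G (z.1 • z.2) := hG.comp (by fun_prop)
  rw [lintegral_map hG (by fun_prop), lintegral_prod _ hcomp.aemeasurable, radialMeasure,
    lintegral_withDensity_eq_lintegral_mul _ (by fun_prop) hcomp.lintegral_prod_right',
    setLIntegral_posOrthant_eq_lintegral_smul hG]
  rfl

theorem setIntegral_posOrthant_eq_integral_smul {E : Type*} [NormedAddCommGroup E]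
    [NormedSpace ℝ E] {G : (Fin (n + 1) → ℝ) → E}
    (hG : IntegrableOn G (posOrthant (Fin (n + 1)))) :
    ∫ x in posOrthant (Fin (n + 1)), G x =
      ∫ x, (∫ s in Set.Ioi (0 : ℝ), s ^ n • G (s • x)) ∂simplexMeasure (n + 1) := by
  have hpolar := measurePreserving_smul_simplexMeasure n
  have hint : Integrable G (Measure.map (fun z : ℝ × (Fin (n + 1) → ℝ) ↦ z.1 • z.2)
      ((radialMeasure n).prod (simplexMeasure (n + 1)))) := by rwa [hpolar.map_eq]
  rw [← hpolar.map_eq, integral_map hpolar.aemeasurable hint.aestronglyMeasurable,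
    integral_prod_symm (fun z ↦ G (z.1 • z.2)) (hint.comp_measurable hpolar.measurable)]
  simp_rw [integral_radialMeasure]

theorem integral_rpow_mul_exp_neg_div_rpow_Ioi {τ r c : ℝ} (hτ : 0 < τ) (hr : 0 < r)
    (hc : 0 < c) :
    ∫ s in Set.Ioi 0, s ^ (-(r * τ) - 1) * Real.exp (-(c / s ^ τ)) =
      Real.Gamma r / τ / c ^ r := by
  have hsubst := integral_comp_rpow_Ioi (fun t ↦ t ^ (r - 1) * Real.exp (-(c * t)))
    (neg_ne_zero.2 hτ.ne')
  rw [Real.integral_rpow_mul_exp_neg_mul_Ioi hr hc, abs_neg, abs_of_pos hτ] at hsubst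
  rw [div_right_comm, eq_div_iff hτ.ne', mul_comm, ← integral_const_mul,
    div_eq_inv_mul (Real.Gamma r), ← Real.inv_rpow hc.le, ← one_div, ← hsubst]
  refine setIntegral_congr_fun measurableSet_Ioi fun s (hs : 0 < s) ↦ ?_
  have hpow : s ^ (-(r * τ) - 1) = s ^ (-τ - 1) * (s ^ (-τ)) ^ (r - 1) := by
    rw [← Real.rpow_mul hs.le, ← Real.rpow_add hs]
    ring_nf
  simp only [hpow, Real.rpow_neg hs.le τ, div_eq_mul_inv, smul_eq_mul, mul_assoc]

theorem ae_simplexMeasure_succ_mem_posOrthant (n : ℕ) :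
    ∀ᵐ x ∂simplexMeasure (n + 1), x ∈ posOrthant (Fin (n + 1)) := by
  rw [simplexMeasure_succ_eq_restrict_posOrthant]
  exact ae_restrict_mem (measurableSet_posOrthant _)

theorem setIntegral_posOrthant_mul_exp_neg_of_homogeneous {k Φ : (Fin (n + 1) → ℝ) → ℝ} {τ r : ℝ}
    (hτ : 0 < τ) (hr : 0 < r) (hk_pos : ∀ x ∈ posOrthant (Fin (n + 1)), 0 < k x)
    (hk : ∀ s > 0, ∀ x ∈ posOrthant (Fin (n + 1)), k (s • x) = k x / s ^ τ)
    (hΦ : ∀ s > 0, ∀ x ∈ posOrthant (Fin (n + 1)),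
      Φ (s • x) = s ^ (-(r * τ) - 1) / s ^ n * Φ x)
    (hint : IntegrableOn (fun x ↦ Φ x * Real.exp (-k x)) (posOrthant (Fin (n + 1)))) :
    ∫ x in posOrthant (Fin (n + 1)), Φ x * Real.exp (-k x) =
      Real.Gamma r / τ * ∫ x, Φ x / k x ^ r ∂simplexMeasure (n + 1) := by
  rw [setIntegral_posOrthant_eq_integral_smul hint, ← integral_const_mul]
  refine integral_congr_ae ?_
  filter_upwards [ae_simplexMeasure_succ_mem_posOrthant n] with x hx
  calc ∫ s in Set.Ioi (0 : ℝ), s ^ n • (Φ (s • x) * Real.exp (-k (s • x)))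
      = ∫ s in Set.Ioi 0, Φ x * (s ^ (-(r * τ) - 1) * Real.exp (-(k x / s ^ τ))) := by
        refine setIntegral_congr_fun measurableSet_Ioi fun s (hs : 0 < s) ↦ ?_
        simp only [hk s hs x hx, hΦ s hs x hx, smul_eq_mul]
        field_simp
    _ = Real.Gamma r / τ * (Φ x / k x ^ r) := by
        rw [integral_const_mul, integral_rpow_mul_exp_neg_div_rpow_Ioi hτ hr (hk_pos x hx)]
        ring

end Simplex

section Sums

variable {ι R : Type*} [Fintype ι] [CommRing R]

theorem sum_sum_mul_mul_sub_sq (q L : ι → R) :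
    ∑ i, ∑ k, q i * q k * (L i - L k) ^ 2 =
      2 * ((∑ i, q i) * ∑ i, q i * L i ^ 2 - (∑ i, q i * L i) ^ 2) := by
  have hexpand (i k : ι) : q i * q k * (L i - L k) ^ 2 =
      q i * L i ^ 2 * q k + q i * (q k * L k ^ 2) - 2 * (q i * L i * (q k * L k)) := by ring
  simp_rw [hexpand, Finset.sum_sub_distrib, Finset.sum_add_distrib, ← Finset.mul_sum,
    ← Finset.sum_mul]
  ring

theorem sum_sum_ite_eq_zero_else [DecidableEq ι] (c : R) :
    ∑ i : ι, ∑ k : ι, (if i = k then 0 else c) =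
      Fintype.card ι * (Fintype.card ι - 1) * c := by
  have hdiag (i k : ι) : (if i = k then 0 else c) = c - if i = k then c else 0 := by
    split_ifs <;> simp
  simp only [hdiag, Finset.sum_sub_distrib, Finset.sum_ite_eq, Finset.mem_univ, if_true,
    Finset.sum_const, Finset.card_univ, nsmul_eq_mul]
  ring

end Sums

section LogDispersion

variable {ι : Type*} {τ : ℝ} {β : ι → ℝ}

/-- The product `(β i / x i ^ τ) (log x i) ^ m (β k / x k ^ τ) (log x k) ^ l`, whose integrals
against a product of Fréchet weights split into one-dimensional log-moments. -/
noncomputable def logMonomial (β : ι → ℝ) (τ : ℝ) (i k : ι) (m l : ℕ) (x : ι → ℝ) : ℝ :=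
  β i / x i ^ τ * Real.log (x i) ^ m * (β k / x k ^ τ * Real.log (x k) ^ l)

theorem mul_sq_log_sub_eq_logMonomial (c : ℝ) (β : ι → ℝ) (τ : ℝ) (i k : ι) (x : ι → ℝ) :
    c * (β i / x i ^ τ * (β k / x k ^ τ) * (Real.log (x i) - Real.log (x k)) ^ 2) =
      c * logMonomial β τ i k 2 0 x + c * logMonomial β τ i k 0 2 x -
        2 * (c * logMonomial β τ i k 1 1 x) := by
  simp only [logMonomial]
  ring

variable [Fintype ι]

/-- The dispersion `½ ∑ i k, q i * q k * (log x i - log x k) ^ 2` of `log x` under the weights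
`q i = β i / x i ^ τ`. -/
noncomputable def logDispersion (β : ι → ℝ) (τ : ℝ) (x : ι → ℝ) : ℝ :=
  1 / 2 * ∑ i, ∑ k, β i / x i ^ τ * (β k / x k ^ τ) * (Real.log (x i) - Real.log (x k)) ^ 2

theorem logDispersion_eq_sum_mul_sum_sub_sq (β : ι → ℝ) (τ : ℝ) (x : ι → ℝ) :
    logDispersion β τ x = (∑ i, β i / x i ^ τ) * (∑ i, β i / x i ^ τ * Real.log (x i) ^ 2) -
      (∑ i, β i / x i ^ τ * Real.log (x i)) ^ 2 := by
  rw [logDispersion, sum_sum_mul_mul_sub_sq (fun i ↦ β i / x i ^ τ) fun i ↦ Real.log (x i)]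
  ring

theorem logDispersion_smul (β : ι → ℝ) (τ : ℝ) {s : ℝ} (hs : 0 < s) {x : ι → ℝ}
    (hx : x ∈ posOrthant ι) :
    logDispersion β τ (s • x) = logDispersion β τ x / (s ^ τ) ^ 2 := by
  have hx_pos := mem_posOrthant.1 hx
  have hlog (i k : ι) : Real.log (s * x i) - Real.log (s * x k) =
      Real.log (x i) - Real.log (x k) := by
    rw [Real.log_mul hs.ne' (hx_pos i).ne', Real.log_mul hs.ne' (hx_pos k).ne',
      add_sub_add_left_eq_sub]
  simp only [logDispersion, Pi.smul_apply, smul_eq_mul, hlog, Real.mul_rpow hs.le (hx_pos _).le,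
    mul_div_assoc, Finset.sum_div]
  field_simp

theorem integrableOn_prod_frechetWeight_mul_logMonomial (hτ : 0 < τ) (hβ : ∀ i, 0 < β i)
    {i k : ι} (hik : i ≠ k) (m l : ℕ) :
    IntegrableOn (fun x ↦ (∏ j, frechetWeight τ (β j) (x j)) * logMonomial β τ i k m l x)
      (posOrthant ι) := by
  rw [IntegrableOn, restrict_posOrthant_eq_pi]
  exact integrable_pi_prod_mul_pair (p := fun j ↦ frechetWeight τ (β j))
    (fun j ↦ integrableOn_frechetWeight hτ (hβ j)) hik
    (integrableOn_frechetWeight_mul_log_pow hτ (hβ i) m)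
    (integrableOn_frechetWeight_mul_log_pow hτ (hβ k) l)

theorem integral_prod_frechetWeight_mul_logMonomial (hτ : 0 < τ) (hβ : ∀ i, 0 < β i)
    {i k : ι} (hik : i ≠ k) (m l : ℕ) :
    ∫ x in posOrthant ι, (∏ j, frechetWeight τ (β j) (x j)) * logMonomial β τ i k m l x =
      (∏ j, 1 / (τ * β j)) *
        ((∫ t, (Real.log (β i) - Real.log t) ^ m ∂gammaMeasure 2 1) / τ ^ m *
          ((∫ t, (Real.log (β k) - Real.log t) ^ l ∂gammaMeasure 2 1) / τ ^ l)) := by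
  simp_rw [← integral_frechetWeight hτ (hβ _)]
  rw [restrict_posOrthant_eq_pi]
  refine integral_pi_prod_mul_pair (p := fun j ↦ frechetWeight τ (β j)) hik
    (A := fun y ↦ β i / y ^ τ * Real.log y ^ m) (B := fun y ↦ β k / y ^ τ * Real.log y ^ l)
    ?_ ?_ <;>
    rw [integral_frechetWeight_mul_log_pow hτ (hβ _), integral_frechetWeight hτ (hβ _)]

theorem integrableOn_prod_frechetWeight_mul_sq_log_sub (hτ : 0 < τ) (hβ : ∀ i, 0 < β i)
    (i k : ι) :
    IntegrableOn (fun x ↦ (∏ j, frechetWeight τ (β j) (x j)) *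
      (β i / x i ^ τ * (β k / x k ^ τ) * (Real.log (x i) - Real.log (x k)) ^ 2))
      (posOrthant ι) := by
  rcases eq_or_ne i k with rfl | hik
  · simp
  have hint := integrableOn_prod_frechetWeight_mul_logMonomial hτ hβ hik
  simp_rw [mul_sq_log_sub_eq_logMonomial]
  exact ((hint 2 0).add (hint 0 2)).sub ((hint 1 1).const_mul 2)

theorem integral_prod_frechetWeight_mul_sq_log_sub (hτ : 0 < τ) (hβ : ∀ i, 0 < β i)
    {i k : ι} (hik : i ≠ k) :
    ∫ x in posOrthant ι, (∏ j, frechetWeight τ (β j) (x j)) *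
        (β i / x i ^ τ * (β k / x k ^ τ) * (Real.log (x i) - Real.log (x k)) ^ 2) =
      (∏ j, 1 / (τ * β j)) *
        (((Real.log (β i) - Real.log (β k)) ^ 2 + 2 * (Real.pi ^ 2 / 6 - 1)) / τ ^ 2) := by
  have hint := integrableOn_prod_frechetWeight_mul_logMonomial hτ hβ hik
  have := isProbabilityMeasure_gammaMeasure two_pos one_pos
  simp_rw [mul_sq_log_sub_eq_logMonomial]
  rw [integral_sub ((hint 2 0).fun_add (hint 0 2)) ((hint 1 1).const_mul 2),
    integral_add (hint 2 0) (hint 0 2), integral_const_mul]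
  simp only [integral_prod_frechetWeight_mul_logMonomial hτ hβ hik]
  rw [← variance_log_gammaMeasure_two one_pos,
    ← integral_sub_sq_add_integral_sub_sq (memLp_log_gammaMeasure two_pos one_pos 2)]
  simp only [pow_zero, pow_one, integral_const, probReal_univ, smul_eq_mul]
  field_simp

theorem prod_frechetWeight_mul_logDispersion (β : ι → ℝ) (τ : ℝ) (x : ι → ℝ) :
    (∏ j, frechetWeight τ (β j) (x j)) * logDispersion β τ x =
      1 / 2 * ∑ i, ∑ k, (∏ j, frechetWeight τ (β j) (x j)) *
        (β i / x i ^ τ * (β k / x k ^ τ) * (Real.log (x i) - Real.log (x k)) ^ 2) := by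
  simp only [logDispersion, mul_left_comm _ (1 / 2 : ℝ), Finset.mul_sum]

theorem integrableOn_prod_frechetWeight_mul_logDispersion (hτ : 0 < τ) (hβ : ∀ i, 0 < β i) :
    IntegrableOn (fun x ↦ (∏ j, frechetWeight τ (β j) (x j)) * logDispersion β τ x)
      (posOrthant ι) := by
  simp_rw [prod_frechetWeight_mul_logDispersion]
  exact .const_mul (integrable_finsetSum _ fun i _ ↦ integrable_finsetSum _ fun k _ ↦
    integrableOn_prod_frechetWeight_mul_sq_log_sub hτ hβ i k) _

theorem integral_prod_frechetWeight_mul_logDispersion (hτ : 0 < τ) (hβ : ∀ i, 0 < β i) :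
    ∫ x in posOrthant ι, (∏ j, frechetWeight τ (β j) (x j)) * logDispersion β τ x =
      (∏ j, 1 / (τ * β j)) *
        ((Fintype.card ι * (Fintype.card ι - 1) * (Real.pi ^ 2 / 6 - 1) +
          1 / 2 * ∑ i, ∑ k, (Real.log (β i) - Real.log (β k)) ^ 2) / τ ^ 2) := by
  classical
  have hpair (i k : ι) :
      ∫ x in posOrthant ι, (∏ j, frechetWeight τ (β j) (x j)) *
          (β i / x i ^ τ * (β k / x k ^ τ) * (Real.log (x i) - Real.log (x k)) ^ 2) =
        (∏ j, 1 / (τ * β j)) * (((Real.log (β i) - Real.log (β k)) ^ 2 +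
          if i = k then 0 else 2 * (Real.pi ^ 2 / 6 - 1)) / τ ^ 2) := by
    split_ifs with hik
    · simp [hik]
    · exact integral_prod_frechetWeight_mul_sq_log_sub hτ hβ hik
  have hint := integrableOn_prod_frechetWeight_mul_sq_log_sub hτ hβ
  simp_rw [prod_frechetWeight_mul_logDispersion]
  rw [integral_const_mul,
    integral_finsetSum _ fun i _ ↦ integrable_finsetSum _ fun k _ ↦ hint i k]
  simp_rw [integral_finsetSum _ fun k _ ↦ hint _ k, hpair, ← Finset.mul_sum, ← Finset.sum_div,
    Finset.sum_add_distrib, sum_sum_ite_eq_zero_else]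
  ring

end LogDispersion

section Concrete

variable {n : ℕ} {τ : ℝ} {β : Fin (n + 1) → ℝ}

theorem kfun_pos (hβ : ∀ i, 0 < β i) {x : Fin (n + 1) → ℝ} (hx : x ∈ posOrthant (Fin (n + 1))) :
    0 < kfun (n + 1) β τ x :=
  Finset.sum_pos (fun i _ ↦ div_pos (hβ i) (Real.rpow_pos_of_pos (mem_posOrthant.1 hx i) _))
    Finset.univ_nonempty

theorem kfun_smul {K : ℕ} (β : Fin K → ℝ) (τ : ℝ) {s : ℝ} (hs : 0 < s) {x : Fin K → ℝ}
    (hx : x ∈ posOrthant (Fin K)) : kfun K β τ (s • x) = kfun K β τ x / s ^ τ := by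
  simp only [kfun, Pi.smul_apply, smul_eq_mul, Finset.sum_div,
    Real.mul_rpow hs.le (mem_posOrthant.1 hx _).le, div_mul_eq_div_div_swap]

theorem prod_smul_rpow {ι : Type*} [Fintype ι] {s : ℝ} (hs : 0 < s) {x : ι → ℝ}
    (hx : x ∈ posOrthant ι) (p : ℝ) :
    ∏ i, (s • x) i ^ p = (s ^ p) ^ Fintype.card ι * ∏ i, x i ^ p := by
  simp only [Pi.smul_apply, smul_eq_mul, Real.mul_rpow hs.le (mem_posOrthant.1 hx _).le,
    Finset.prod_mul_distrib, Finset.prod_const, Finset.card_univ]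

theorem prod_rpow_mul_logDispersion_smul (β : Fin (n + 1) → ℝ) (τ : ℝ) {s : ℝ} (hs : 0 < s)
    {x : Fin (n + 1) → ℝ} (hx : x ∈ posOrthant (Fin (n + 1))) :
    (∏ i, (s • x) i ^ (-(τ + 1))) * logDispersion β τ (s • x) =
      s ^ (-(((n + 3 : ℕ) : ℝ) * τ) - 1) / s ^ n *
        ((∏ i, x i ^ (-(τ + 1))) * logDispersion β τ x) := by
  have hexponent : (s ^ (-(τ + 1))) ^ (n + 1) / (s ^ τ) ^ 2 =
      s ^ (-(((n + 3 : ℕ) : ℝ) * τ) - 1) / s ^ n := by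
    simp only [← Real.rpow_mul_natCast hs.le, ← Real.rpow_natCast s n, ← Real.rpow_sub hs]
    push_cast
    ring_nf
  rw [prod_smul_rpow hs hx, logDispersion_smul β τ hs hx, Fintype.card_fin, ← hexponent]
  ring

theorem hfun_mul_sub_eq_prod_rpow_mul_logDispersion_div (hβ : ∀ i, 0 < β i) {x : Fin (n + 1) → ℝ}
    (hx : x ∈ posOrthant (Fin (n + 1))) :
    hfun (n + 1) β τ x * ((∑ l, β l / x l ^ τ * Real.log (x l) ^ 2) / kfun (n + 1) β τ x -
        (∑ l, β l / x l ^ τ * Real.log (x l)) ^ 2 / kfun (n + 1) β τ x ^ 2) =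
      (∏ i, x i ^ (-(τ + 1))) * logDispersion β τ x /
        kfun (n + 1) β τ x ^ ((n + 3 : ℕ) : ℝ) := by
  have hk := kfun_pos (τ := τ) hβ hx
  rw [logDispersion_eq_sum_mul_sum_sub_sq, hfun, ← kfun, Real.rpow_neg hk.le, Real.rpow_natCast,
    Real.rpow_natCast]
  field_simp
  ring

theorem integral_prod_rpow_mul_logDispersion_div_kfun_rpow (hτ : 0 < τ) (hβ : ∀ i, 0 < β i) :
    ∫ x, (∏ i, x i ^ (-(τ + 1))) * logDispersion β τ x / kfun (n + 1) β τ x ^ ((n + 3 : ℕ) : ℝ)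
        ∂simplexMeasure (n + 1) =
      τ / (n + 2).factorial * ∫ x in posOrthant (Fin (n + 1)),
        (∏ j, frechetWeight τ (β j) (x j)) * logDispersion β τ x := by
  have hweight (x : Fin (n + 1) → ℝ) :
      (∏ j, frechetWeight τ (β j) (x j)) * logDispersion β τ x =
        (∏ i, x i ^ (-(τ + 1))) * logDispersion β τ x * Real.exp (-kfun (n + 1) β τ x) := by
    rw [prod_frechetWeight, kfun, mul_right_comm]
  have hint := integrableOn_prod_frechetWeight_mul_logDispersion hτ hβ
  simp_rw [hweight] at hint ⊢
  rw [setIntegral_posOrthant_mul_exp_neg_of_homogeneous hτ (Nat.cast_pos.2 (n + 2).succ_pos)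
    (fun x ↦ kfun_pos hβ) (fun s hs x ↦ kfun_smul β τ hs)
    (fun s hs x ↦ prod_rpow_mul_logDispersion_smul β τ hs) hint]
  have hGamma : Real.Gamma (n + 3 : ℕ) = (n + 2).factorial := by
    rw [← Real.Gamma_nat_eq_factorial, ← Nat.cast_add_one]
  rw [hGamma]
  field_simp

end Concrete

/-- The τ–τ component of the Fisher information of the Concrete distribution. -/
theorem concrete_fisher_tau_tau
    (K : ℕ) (hK : 2 ≤ K) (τ : ℝ) (hτ : 0 < τ)
    (β : Fin K → ℝ) (hβ : ∀ i, 0 < β i) :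
    ∫ x, hfun K β τ x *
          ((∑ l, (β l / x l ^ τ) * Real.log (x l) ^ 2) / kfun K β τ x
            - (∑ l, (β l / x l ^ τ) * Real.log (x l)) ^ 2 / kfun K β τ x ^ 2)
        ∂(simplexMeasure K)
      = J0 K β τ *
          ((K : ℝ) * ((K : ℝ) - 1) * (Real.pi ^ 2 / 6 - 1)
            + (1 / 2) * ∑ i, ∑ k, (Real.log (β i) - Real.log (β k)) ^ 2) /
          ((K : ℝ) * ((K : ℝ) + 1) * τ ^ 2) := by
  obtain ⟨n, rfl⟩ : ∃ n, K = n + 1 := ⟨K - 1, by omega⟩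
  rw [integral_congr_ae ((ae_simplexMeasure_succ_mem_posOrthant n).mono fun x ↦
      hfun_mul_sub_eq_prod_rpow_mul_logDispersion_div hβ),
    integral_prod_rpow_mul_logDispersion_div_kfun_rpow hτ hβ,
    integral_prod_frechetWeight_mul_logDispersion hτ hβ]
  have hprod : ∏ j, 1 / (τ * β j) = 1 / (τ ^ (n + 1) * ∏ j, β j) := by
    simp [Finset.prod_mul_distrib]
  have hprod_ne : ∏ j, β j ≠ 0 := Finset.prod_ne_zero_iff.2 fun j _ ↦ (hβ j).ne'
  rw [hprod, J0, Nat.factorial_succ, Nat.factorial_succ, Fintype.card_fin]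
  push_cast
  field_simp
  ring
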